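/- Let N be odd, α ∈ ℝ with α ≠ 1, and set α' = (α+3)/(α−1). Suppose v, w ∈ V_N are nonzero vectors such that H(α) v = E(α) v, H(α') w = E(α') w, both v(μ) = 0 and w(μ) = 0 whenever n₊(μ) is odd, w(−) ≠ 0 where (−) is the all-minus configuration, and the eigenspace {u ∈ V_N : H(α') u = E(α') u} has complex dimension exactly 2. Then the sum rule (Σ_μ v(μ)) · (Σ_μ w(μ)) = 2^{N−1} · v(−) · w(−) holds, where both sums run over all 2^N configurations. -/

import Mathlib

open Finset

/-- Spin configurations of length `N`: maps `ℤ/N → {−1,+1}` (spins encoded as units of `ℤ`). -/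
abbrev Config (N : ℕ) : Type := ZMod N → ℤˣ

/-- The state space `V_N`: complex-valued functions on configurations. -/
abbrev StateSpace (N : ℕ) : Type := Config N → ℂ

/-- The spin value `μ_j` as a complex number (`+1` or `−1`). -/
def spin {N : ℕ} (μ : Config N) (j : ZMod N) : ℂ := ((μ j : ℤ) : ℂ)

/-- Flip the spin at site `j`. -/
def flipAt {N : ℕ} (μ : Config N) (j : ZMod N) : Config N :=
  Function.update μ j (-(μ j))

/-- `μ^{(j,j+1)}`: the configuration `μ` with the spins at sites `j` and `j+1` (mod `N`) flipped. -/
def flipPair {N : ℕ} (μ : Config N) (j : ZMod N) : Config N :=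
  flipAt (flipAt μ j) (j + 1)

/-- The periodic XYZ Hamiltonian with real couplings `Jx, Jy, Jz`:
`(H Ψ)(μ) = −(1/2) Σ_j [(Jx − Jy μ_j μ_{j+1}) Ψ(μ^{(j,j+1)}) + Jz μ_j μ_{j+1} Ψ(μ)]`. -/
noncomputable def Hxyz (N : ℕ) [NeZero N] (Jx Jy Jz : ℝ) (Ψ : StateSpace N) : StateSpace N :=
  fun μ => -(1/2 : ℂ) * ∑ j : ZMod N,
    (((Jx : ℂ) - (Jy : ℂ) * spin μ j * spin μ (j + 1)) * Ψ (flipPair μ j)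
      + (Jz : ℂ) * spin μ j * spin μ (j + 1) * Ψ μ)

/-- `n₊(μ)`: the number of sites `j` with `μ_j = +1`. -/
def nPlus {N : ℕ} [NeZero N] (μ : Config N) : ℕ :=
  (Finset.univ.filter (fun j => μ j = 1)).card

/-- `H(α)`: the XYZ Hamiltonian with `Jx = 1+α`, `Jy = 1−α`, `Jz = (α²−1)/2`. -/
noncomputable def Halpha (N : ℕ) [NeZero N] (α : ℝ) : StateSpace N → StateSpace N :=
  Hxyz N (1 + α) (1 - α) ((α ^ 2 - 1) / 2)

/-- `E(α) = −(N/4)(3 + α²)`. -/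
noncomputable def Eval (N : ℕ) (α : ℝ) : ℝ := -(N / 4 : ℝ) * (3 + α ^ 2)

/-- The periodic XYZ Hamiltonian as a linear operator on `V_N`. -/
noncomputable def HxyzL (N : ℕ) [NeZero N] (Jx Jy Jz : ℝ) : Module.End ℂ (StateSpace N) where
  toFun := Hxyz N Jx Jy Jz
  map_add' Ψ Φ := by
    funext μ
    simp only [Hxyz, Pi.add_apply, mul_add, add_mul, Finset.sum_add_distrib]
    ring
  map_smul' c Ψ := by
    funext μ
    simp only [Hxyz, Pi.smul_apply, smul_eq_mul, RingHom.id_apply, mul_add, add_mul,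
      Finset.mul_sum, Finset.sum_add_distrib]
    congr 1 <;> exact Finset.sum_congr rfl (fun j _ => by ring)

/-- `H(α)` as a linear operator on `V_N`. -/
noncomputable def HalphaL (N : ℕ) [NeZero N] (α : ℝ) : Module.End ℂ (StateSpace N) :=
  HxyzL N (1 + α) (1 - α) ((α ^ 2 - 1) / 2)

/-!
The Hadamard transform `𝓗` on every site exchanges the Pauli operators `σˣ` and `σᶻ`, hence the
couplings `Jx` and `Jz`; up to rescaling this is the involution `α ↦ (α + 3) / (α - 1)`. So `𝓗 v`
lies in the two-dimensional eigenspace containing `w`. Spin reversal `R` preserves this eigenspace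
and, as `N` is odd, reverses the parity of `n₊`, so `𝓗 v = a w + b R w`. Evaluating this relation at
the all-plus and all-minus configurations gives `∑ v = b w(-)` and `-∑ v = a w(-)`, and applying `𝓗`
once more, with `𝓗² = 2 ^ N`, gives `2 ^ N v(-) = (b - a) ∑ w`; eliminating `a` and `b` yields the
sum rule.
-/

section LinearAlgebra

theorem eigenspace_smul_mul {K V : Type*} [Field K] [AddCommGroup V] [Module K V] {c : K}
    (hc : c ≠ 0) (f : Module.End K V) (a : K) :
    Module.End.eigenspace (c • f) (c * a) = Module.End.eigenspace f a := by
  ext x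
  rw [Module.End.mem_eigenspace_iff, Module.End.mem_eigenspace_iff, LinearMap.smul_apply, mul_smul]
  exact smul_right_inj hc

theorem span_pair_eq_of_finrank_le_two {K V : Type*} [DivisionRing K] [AddCommGroup V] [Module K V]
    {S : Submodule K V} [FiniteDimensional K S] {x y : V} (hx : x ∈ S) (hy : y ∈ S)
    (hxy : LinearIndependent K ![x, y]) (hS : Module.finrank K S ≤ 2) :
    Submodule.span K {x, y} = S := by
  refine Submodule.eq_of_le_of_finrank_le (Submodule.span_le.mpr (Set.pair_subset hx hy)) ?_
  have hspan := finrank_span_eq_card hxy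
  rw [Matrix.range_cons_cons_empty, Fintype.card_fin] at hspan
  exact hS.trans_eq hspan.symm

end LinearAlgebra

section Spins

variable {N : ℕ} (μ : Config N) (i j : ZMod N)

theorem spin_mul_self : spin μ j * spin μ j = 1 := by
  rcases Int.units_eq_one_or (μ j) with h | h <;> simp [spin, h]

theorem spin_neg : spin (-μ) j = -spin μ j := by
  simp [spin]

theorem flipAt_flipAt : flipAt (flipAt μ j) j = μ := by
  simp [flipAt]

theorem flipAt_involutive : Function.Involutive fun μ : Config N => flipAt μ j :=
  fun μ => flipAt_flipAt μ j

theorem flipAt_neg : flipAt (-μ) j = -flipAt μ j := by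
  funext k
  rcases eq_or_ne k j with rfl | h
  · simp [flipAt]
  · simp [flipAt, h]

theorem spin_flipAt_self : spin (flipAt μ j) j = -spin μ j := by
  simp [spin, flipAt]

variable {i j} in
theorem spin_flipAt_of_ne (h : i ≠ j) : spin (flipAt μ j) i = spin μ i := by
  simp [spin, flipAt, h]

theorem spin_mul_spin_flipAt_flipAt :
    spin (flipAt (flipAt μ i) j) i * spin (flipAt (flipAt μ i) j) j = spin μ i * spin μ j := by
  rcases eq_or_ne i j with rfl | h
  · rw [spin_mul_self, spin_mul_self]
  · rw [spin_flipAt_of_ne _ h, spin_flipAt_self, spin_flipAt_self, spin_flipAt_of_ne _ h.symm,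
      neg_mul_neg]

end Spins

section Operators

variable {N : ℕ}

/-- The Pauli matrix `σˣ` acting on site `j`. -/
def pauliX (j : ZMod N) : Module.End ℂ (StateSpace N) :=
  LinearMap.funLeft ℂ ℂ fun μ => flipAt μ j

/-- The Pauli matrix `σᶻ` acting on site `j`. -/
def pauliZ (j : ZMod N) : Module.End ℂ (StateSpace N) :=
  LinearMap.mulLeft ℂ fun μ => spin μ j

/-- The global spin reversal `(R Ψ)(μ) = Ψ(−μ)`, a symmetry of every XYZ Hamiltonian. -/
def spinFlip : Module.End ℂ (StateSpace N) :=
  LinearMap.funLeft ℂ ℂ fun μ => -μ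

@[simp]
theorem pauliX_apply (j : ZMod N) (f : StateSpace N) (μ : Config N) :
    pauliX j f μ = f (flipAt μ j) := rfl

@[simp]
theorem pauliZ_apply (j : ZMod N) (f : StateSpace N) (μ : Config N) :
    pauliZ j f μ = spin μ j * f μ := rfl

@[simp]
theorem spinFlip_apply (f : StateSpace N) (μ : Config N) : spinFlip f μ = f (-μ) := rfl

theorem commute_pauliX_mul_pauliX_pauliZ_mul_pauliZ (i j : ZMod N) :
    Commute (pauliX i * pauliX j) (pauliZ i * pauliZ j) := by
  refine LinearMap.ext fun f => funext fun μ => ?_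
  simp only [Module.End.mul_apply, pauliX_apply, pauliZ_apply, ← mul_assoc,
    spin_mul_spin_flipAt_flipAt]

theorem commute_spinFlip_pauliX (j : ZMod N) : Commute spinFlip (pauliX j) :=
  LinearMap.ext fun f => funext fun μ => congrArg f (flipAt_neg μ j)

theorem commute_spinFlip_pauliZ_mul_pauliZ (i j : ZMod N) :
    Commute spinFlip (pauliZ i * pauliZ j) := by
  refine LinearMap.ext fun f => funext fun μ => ?_
  simp only [Module.End.mul_apply, spinFlip_apply, pauliZ_apply, spin_neg, neg_mul, mul_neg,
    neg_neg]

end Operators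

section Hamiltonian

variable {N : ℕ} [NeZero N]

theorem HxyzL_eq_sum_pauli (Jx Jy Jz : ℝ) :
    HxyzL N Jx Jy Jz = -(1 / 2 : ℂ) • ∑ j,
      ((Jx : ℂ) • (pauliX j * pauliX (j + 1))
        - (Jy : ℂ) • (pauliZ j * pauliZ (j + 1) * (pauliX j * pauliX (j + 1)))
        + (Jz : ℂ) • (pauliZ j * pauliZ (j + 1))) := by
  refine LinearMap.ext fun f => funext fun μ => ?_
  simp only [HxyzL, LinearMap.coe_mk, AddHom.coe_mk, Hxyz, LinearMap.smul_apply,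
    LinearMap.sum_apply, LinearMap.add_apply, LinearMap.sub_apply, Module.End.mul_apply,
    Pi.smul_apply, Finset.sum_apply, Pi.add_apply, Pi.sub_apply, pauliX_apply, pauliZ_apply,
    smul_eq_mul, flipPair]
  congr 1
  exact Finset.sum_congr rfl fun j _ => by ring

theorem commute_spinFlip_HxyzL (Jx Jy Jz : ℝ) : Commute spinFlip (HxyzL N Jx Jy Jz) := by
  rw [HxyzL_eq_sum_pauli]
  refine (Commute.sum_right _ _ _ fun j _ => ?_).smul_right _
  have hX := (commute_spinFlip_pauliX j).mul_right (commute_spinFlip_pauliX (j + 1))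
  have hZ := commute_spinFlip_pauliZ_mul_pauliZ j (j + 1)
  exact ((hX.smul_right _).sub_right ((hZ.mul_right hX).smul_right _)).add_right (hZ.smul_right _)

theorem spinFlip_mem_eigenspace_HxyzL {Jx Jy Jz : ℝ} {E : ℂ} {f : StateSpace N}
    (hf : f ∈ Module.End.eigenspace (HxyzL N Jx Jy Jz) E) :
    spinFlip f ∈ Module.End.eigenspace (HxyzL N Jx Jy Jz) E :=
  Module.End.mapsTo_genEigenspace_of_comm (commute_spinFlip_HxyzL Jx Jy Jz).symm E 1 hf

theorem HxyzL_mul_couplings (s Jx Jy Jz : ℝ) :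
    HxyzL N (s * Jx) (s * Jy) (s * Jz) = (s : ℂ) • HxyzL N Jx Jy Jz := by
  rw [HxyzL_eq_sum_pauli, HxyzL_eq_sum_pauli, smul_comm, Finset.smul_sum (r := (s : ℂ))]
  simp only [Complex.ofReal_mul, mul_smul, smul_add, smul_sub (s : ℂ)]

/-- The involution `α ↦ (α + 3) / (α - 1)` exchanges `Jx` and `Jz` up to a common factor, by which
the energy `E(α)` scales as well. -/
theorem eigenspace_HalphaL_dual {α : ℝ} (hα : α ≠ 1) :
    Module.End.eigenspace (HalphaL N ((α + 3) / (α - 1)))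
        ((Eval N ((α + 3) / (α - 1)) : ℝ) : ℂ)
      = Module.End.eigenspace (HxyzL N ((α ^ 2 - 1) / 2) (1 - α) (1 + α))
        ((Eval N α : ℝ) : ℂ) := by
  have hα' : α - 1 ≠ 0 := sub_ne_zero.mpr hα
  set s : ℝ := 4 / (α - 1) ^ 2 with hs
  have hs0 : (s : ℂ) ≠ 0 := Complex.ofReal_ne_zero.mpr (by positivity)
  have hx : 1 + (α + 3) / (α - 1) = s * ((α ^ 2 - 1) / 2) := by
    rw [hs]; field_simp; ring
  have hy : 1 - (α + 3) / (α - 1) = s * (1 - α) := by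
    rw [hs]; field_simp; ring
  have hz : (((α + 3) / (α - 1)) ^ 2 - 1) / 2 = s * (1 + α) := by
    rw [hs]; field_simp; ring
  have hE : Eval N ((α + 3) / (α - 1)) = s * Eval N α := by
    rw [hs]; unfold Eval; field_simp; ring
  rw [HalphaL, hx, hy, hz, hE, HxyzL_mul_couplings, Complex.ofReal_mul, eigenspace_smul_mul hs0]

end Hamiltonian

section Hadamard

variable {N : ℕ} [NeZero N] (μ ν : Config N) (j : ZMod N)

/-- The product `∏ j, μ_j` of all the spins of a configuration, a sign recording the parity of the
number of minus spins. -/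
def spinProd : ℂ := ∏ j, spin μ j

/-- The matrix of the unnormalized Hadamard gate applied to every site: the `N`-fold tensor power
of `!![1, 1; 1, -1]` in the basis `+1, -1`. -/
def hadamardMatrix (N : ℕ) [NeZero N] : Matrix (Config N) (Config N) ℂ :=
  Matrix.of fun μ ν => ∏ j, if μ j = 1 then 1 else spin ν j

/-- The unnormalized Hadamard gate applied to every site; it exchanges `σˣ` and `σᶻ`. -/
def hadamard : Module.End ℂ (StateSpace N) := (hadamardMatrix N).mulVecLin

theorem hadamardMatrix_apply :
    hadamardMatrix N μ ν = ∏ j, if μ j = 1 then 1 else spin ν j := rfl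

theorem hadamard_apply (f : StateSpace N) : hadamard f μ = ∑ ν, hadamardMatrix N μ ν * f ν := rfl

theorem hadamardMatrix_comm : hadamardMatrix N μ ν = hadamardMatrix N ν μ := by
  refine Finset.prod_congr rfl fun j _ => ?_
  rcases Int.units_eq_one_or (μ j) with h | h <;>
    rcases Int.units_eq_one_or (ν j) with h' | h' <;> simp [spin, h, h']

theorem hadamardMatrix_one_left : hadamardMatrix N 1 ν = 1 := by
  simp [hadamardMatrix_apply]

theorem hadamardMatrix_neg_one_left : hadamardMatrix N (-1) ν = spinProd ν := by
  simp [hadamardMatrix_apply, spinProd]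

theorem hadamardMatrix_flipAt_left :
    hadamardMatrix N (flipAt μ j) ν = spin ν j * hadamardMatrix N μ ν := by
  simp only [hadamardMatrix_apply]
  rw [← Finset.mul_prod_erase _ _ (Finset.mem_univ j),
    ← Finset.mul_prod_erase Finset.univ (fun i => if μ i = 1 then 1 else spin ν i)
      (Finset.mem_univ j), ← mul_assoc]
  congr 1
  · rcases Int.units_eq_one_or (μ j) with h | h <;> simp [flipAt, h, spin_mul_self]
  · exact Finset.prod_congr rfl fun i hi => by simp [flipAt, Finset.ne_of_mem_erase hi]

theorem hadamardMatrix_flipAt_right :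
    hadamardMatrix N μ (flipAt ν j) = spin μ j * hadamardMatrix N μ ν := by
  rw [hadamardMatrix_comm, hadamardMatrix_flipAt_left, hadamardMatrix_comm]

theorem hadamardMatrix_neg_right :
    hadamardMatrix N μ (-ν) = spinProd μ * hadamardMatrix N μ ν := by
  rw [hadamardMatrix_apply, hadamardMatrix_apply, spinProd, ← Finset.prod_mul_distrib]
  refine Finset.prod_congr rfl fun j _ => ?_
  rcases Int.units_eq_one_or (μ j) with h | h <;> simp [spin, h]

theorem hadamardMatrix_mul_self : hadamardMatrix N * hadamardMatrix N = (2 ^ N : ℂ) • 1 := by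
  ext μ ν
  have hsite (j : ZMod N) :
      ∑ a : ℤˣ, (if μ j = 1 then 1 else ((a : ℤ) : ℂ)) * (if a = 1 then 1 else spin ν j)
        = if μ j = ν j then 2 else 0 := by
    rcases Int.units_eq_one_or (μ j) with h | h <;>
      rcases Int.units_eq_one_or (ν j) with h' | h' <;> norm_num [spin, h, h', UnitsInt.univ]
  calc (hadamardMatrix N * hadamardMatrix N) μ ν
      = ∏ j, ∑ a : ℤˣ,
          (if μ j = 1 then 1 else ((a : ℤ) : ℂ)) * (if a = 1 then 1 else spin ν j) := by
        simp only [Matrix.mul_apply, hadamardMatrix_apply, ← Finset.prod_mul_distrib,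
          Fintype.prod_sum, spin]
    _ = ∏ j, if μ j = ν j then (2 : ℂ) else 0 := Finset.prod_congr rfl fun j _ => hsite j
    _ = ((2 ^ N : ℂ) • (1 : Matrix (Config N) (Config N) ℂ)) μ ν := by
        rcases eq_or_ne μ ν with rfl | h
        · simp
        · obtain ⟨j, hj⟩ := Function.ne_iff.mp h
          rw [Finset.prod_eq_zero (Finset.mem_univ j) (if_neg hj)]
          simp [h]

theorem hadamard_hadamard (f : StateSpace N) : hadamard (hadamard f) = (2 ^ N : ℂ) • f := by
  rw [hadamard, Matrix.mulVecLin_apply, Matrix.mulVecLin_apply, Matrix.mulVec_mulVec,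
    hadamardMatrix_mul_self, Matrix.smul_mulVec, Matrix.one_mulVec]

theorem hadamard_spinFlip (f : StateSpace N) :
    hadamard (spinFlip f) μ = spinProd μ * hadamard f μ := by
  simp only [hadamard_apply, Finset.mul_sum, ← mul_assoc, ← hadamardMatrix_neg_right]
  exact Fintype.sum_equiv (Equiv.neg _) _ _ fun ν => by simp

theorem hadamard_apply_one (f : StateSpace N) : hadamard f 1 = ∑ μ, f μ := by
  simp only [hadamard_apply, hadamardMatrix_one_left, one_mul]

theorem hadamard_mul_pauliX : hadamard * pauliX j = pauliZ j * hadamard := by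
  refine LinearMap.ext fun f => funext fun μ => ?_
  simp only [Module.End.mul_apply, hadamard_apply, pauliZ_apply, pauliX_apply, Finset.mul_sum,
    ← mul_assoc, ← hadamardMatrix_flipAt_right]
  refine Fintype.sum_equiv (flipAt_involutive j).toPerm _ _ fun ν => ?_
  rw [Function.Involutive.coe_toPerm, flipAt_flipAt]

theorem hadamard_mul_pauliZ : hadamard * pauliZ j = pauliX j * hadamard := by
  refine LinearMap.ext fun f => funext fun μ => ?_
  simp only [Module.End.mul_apply, hadamard_apply, pauliZ_apply, pauliX_apply,
    hadamardMatrix_flipAt_left]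
  exact Finset.sum_congr rfl fun ν _ => by ring

theorem semiconjBy_hadamard_HxyzL (Jx Jy Jz : ℝ) :
    SemiconjBy hadamard (HxyzL N Jx Jy Jz) (HxyzL N Jz Jy Jx) := by
  have hX (j : ZMod N) : SemiconjBy hadamard (pauliX j) (pauliZ j) := hadamard_mul_pauliX j
  have hZ (j : ZMod N) : SemiconjBy hadamard (pauliZ j) (pauliX j) := hadamard_mul_pauliZ j
  rw [HxyzL_eq_sum_pauli, HxyzL_eq_sum_pauli, SemiconjBy, mul_smul_comm, smul_mul_assoc,
    Finset.mul_sum, Finset.sum_mul]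
  congr 1
  refine Finset.sum_congr rfl fun j _ => ?_
  have hXX := (hX j).mul_right (hX (j + 1))
  have hZZ := (hZ j).mul_right (hZ (j + 1))
  have hYY := hZZ.mul_right hXX
  rw [(commute_pauliX_mul_pauliX_pauliZ_mul_pauliZ j (j + 1)).eq] at hYY
  simp only [mul_add, add_mul, mul_sub, sub_mul, mul_smul_comm, smul_mul_assoc, hXX.eq, hZZ.eq,
    hYY.eq]
  abel

theorem hadamard_mem_eigenspace_HxyzL {Jx Jy Jz : ℝ} {E : ℂ} {f : StateSpace N}
    (hf : f ∈ Module.End.eigenspace (HxyzL N Jx Jy Jz) E) :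
    hadamard f ∈ Module.End.eigenspace (HxyzL N Jz Jy Jx) E := by
  rw [Module.End.mem_eigenspace_iff] at hf ⊢
  rw [← Module.End.mul_apply, ← (semiconjBy_hadamard_HxyzL Jx Jy Jz).eq, Module.End.mul_apply, hf,
    map_smul]

end Hadamard

section Parity

variable {N : ℕ} [NeZero N]

theorem nPlus_one : nPlus (1 : Config N) = N := by
  simp [nPlus]

theorem nPlus_add_nPlus_neg (μ : Config N) : nPlus μ + nPlus (-μ) = N := by
  have hneg (j : ZMod N) : (-μ) j = 1 ↔ ¬μ j = 1 := by
    rcases Int.units_eq_one_or (μ j) with h | h <;> simp [h]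
  simp only [nPlus, hneg, Finset.card_filter_add_card_filter_not, Finset.card_univ, ZMod.card]

theorem odd_nPlus_neg_iff (hN : Odd N) {μ : Config N} : Odd (nPlus (-μ)) ↔ Even (nPlus μ) := by
  rw [← nPlus_add_nPlus_neg μ] at hN
  exact Nat.odd_add'.mp hN

theorem spinProd_eq_neg_one_pow (μ : Config N) : spinProd μ = (-1) ^ nPlus (-μ) := by
  have hspin (j : ZMod N) : spin μ j = if (-μ) j = 1 then -1 else 1 := by
    rcases Int.units_eq_one_or (μ j) with h | h <;> simp [spin, h]
  simp only [spinProd, hspin, Finset.prod_ite, Finset.prod_const, one_pow, mul_one, nPlus]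

theorem apply_neg_eq_zero_of_apply_ne_zero (hN : Odd N) {f : StateSpace N}
    (hf : ∀ μ, Odd (nPlus μ) → f μ = 0) {μ : Config N} (hμ : f μ ≠ 0) : f (-μ) = 0 := by
  have heven : Even (nPlus μ) := Nat.not_odd_iff_even.mp (mt (hf μ) hμ)
  exact hf _ ((odd_nPlus_neg_iff hN).mpr heven)

theorem linearIndependent_pair_spinFlip (hN : Odd N) {f : StateSpace N}
    (hf : ∀ μ, Odd (nPlus μ) → f μ = 0) (hf0 : f ≠ 0) :
    LinearIndependent ℂ ![f, spinFlip f] := by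
  obtain ⟨μ, hμ : f μ ≠ 0⟩ := Function.ne_iff.mp hf0
  have hneg := apply_neg_eq_zero_of_apply_ne_zero hN hf hμ
  refine LinearIndependent.pair_iff.mpr fun a b hab => ⟨?_, ?_⟩
  · simpa [hneg, hμ] using congrFun hab μ
  · simpa [hneg, hμ] using congrFun hab (-μ)

theorem hadamard_apply_neg_one (hN : Odd N) {f : StateSpace N}
    (hf : ∀ μ, Odd (nPlus μ) → f μ = 0) : hadamard f (-1) = -∑ μ, f μ := by
  rw [hadamard_apply, ← Finset.sum_neg_distrib]
  refine Finset.sum_congr rfl fun μ _ => ?_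
  rw [hadamardMatrix_neg_one_left, spinProd_eq_neg_one_pow]
  rcases Nat.even_or_odd (nPlus μ) with hμ | hμ
  · rw [((odd_nPlus_neg_iff hN).mpr hμ).neg_one_pow, neg_one_mul]
  · rw [hf μ hμ, mul_zero, neg_zero]

end Parity

section SumRule

variable {N : ℕ} [NeZero N]

theorem sum_mul_sum_of_hadamard_mem_span (hN : Odd N) {v w : StateSpace N}
    (hv : ∀ μ, Odd (nPlus μ) → v μ = 0) (hw : ∀ μ, Odd (nPlus μ) → w μ = 0)
    (hspan : hadamard v ∈ Submodule.span ℂ {w, spinFlip w}) :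
    (∑ μ, v μ) * ∑ μ, w μ = 2 ^ (N - 1) * v (-1) * w (-1) := by
  obtain ⟨a, b, hab⟩ := Submodule.mem_span_pair.mp hspan
  have hw_one : w 1 = 0 := hw 1 (by rwa [nPlus_one])
  have hplus : ∑ μ, v μ = b * w (-1) := by
    rw [← hadamard_apply_one, ← hab]
    simp [hw_one]
  have hminus : -∑ μ, v μ = a * w (-1) := by
    rw [← hadamard_apply_neg_one hN hv, ← hab]
    simp [hw_one]
  have hspinProd : spinProd (-1 : Config N) = -1 := by
    rw [spinProd_eq_neg_one_pow, neg_neg, nPlus_one, hN.neg_one_pow]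
  have hinv : 2 * 2 ^ (N - 1) * v (-1) = (b - a) * ∑ μ, w μ := by
    calc 2 * 2 ^ (N - 1) * v (-1) = hadamard (hadamard v) (-1) := by
          rw [hadamard_hadamard, Pi.smul_apply, smul_eq_mul, mul_pow_sub_one (NeZero.ne N)]
      _ = a * hadamard w (-1) + b * hadamard (spinFlip w) (-1) := by
          simp only [← hab, map_add, map_smul, Pi.add_apply, Pi.smul_apply, smul_eq_mul]
      _ = (b - a) * ∑ μ, w μ := by
          rw [hadamard_spinFlip, hspinProd, hadamard_apply_neg_one hN hw]
          ring
  linear_combination (1 / 2 : ℂ) * (∑ μ, w μ) * (hplus - hminus) - (1 / 2 : ℂ) * w (-1) * hinv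

theorem linear_sum_rule_general (hN : Odd N) {Jx Jy Jz : ℝ} {E : ℂ} {v w : StateSpace N}
    (hv : v ∈ Module.End.eigenspace (HxyzL N Jx Jy Jz) E)
    (hw : w ∈ Module.End.eigenspace (HxyzL N Jz Jy Jx) E)
    (hvpar : ∀ μ, Odd (nPlus μ) → v μ = 0) (hwpar : ∀ μ, Odd (nPlus μ) → w μ = 0)
    (hdim : Module.finrank ℂ (Module.End.eigenspace (HxyzL N Jz Jy Jx) E) ≤ 2) :
    (∑ μ, v μ) * ∑ μ, w μ = 2 ^ (N - 1) * v (-1) * w (-1) := by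
  rcases eq_or_ne w 0 with rfl | hw0
  · simp
  have hli := linearIndependent_pair_spinFlip hN hwpar hw0
  have hspan := span_pair_eq_of_finrank_le_two hw (spinFlip_mem_eigenspace_HxyzL hw) hli hdim
  refine sum_mul_sum_of_hadamard_mem_span hN hvpar hwpar ?_
  rw [hspan]
  exact hadamard_mem_eigenspace_HxyzL hv

end SumRule

/-- The linear sum rule `(Σ_μ v(μ)) (Σ_μ w(μ)) = 2^{N−1} v(−⋯−) w(−⋯−)`. -/
theorem linear_sum_rule (N : ℕ) [NeZero N]
    (hN : Odd N) (α : ℝ) (hα : α ≠ 1)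
    (v w : StateSpace N) (hv0 : v ≠ 0) (hw0 : w ≠ 0)
    (hv : Halpha N α v = ((Eval N α : ℝ) : ℂ) • v)
    (hw : Halpha N ((α + 3) / (α - 1)) w = ((Eval N ((α + 3) / (α - 1)) : ℝ) : ℂ) • w)
    (hvpar : ∀ μ : Config N, Odd (nPlus μ) → v μ = 0)
    (hwpar : ∀ μ : Config N, Odd (nPlus μ) → w μ = 0)
    (hwm : w (fun _ => -1) ≠ 0)
    (hdim : Module.finrank ℂ
      (Module.End.eigenspace (HalphaL N ((α + 3) / (α - 1)))
        ((Eval N ((α + 3) / (α - 1)) : ℝ) : ℂ)) = 2) :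
    (∑ μ : Config N, v μ) * (∑ μ : Config N, w μ)
      = 2 ^ (N - 1) * v (fun _ => -1) * w (fun _ => -1) := by
  have hE := eigenspace_HalphaL_dual (N := N) hα
  exact linear_sum_rule_general hN (Module.End.mem_eigenspace_iff.mpr hv)
    (hE.le (Module.End.mem_eigenspace_iff.mpr hw)) hvpar hwpar (hE ▸ hdim.le)
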